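/- Let B be a blocking set of Rédei type in PG(2,q) with Rédei line ℓ. (1) If there is a point in B∖ℓ contained in exactly one bisecant of B, then |B ∩ ℓ| ≢ 1 (mod p). (2) If R₁, R₂ ∈ B∖ℓ are each contained in exactly one bisecant of B, and there is a point T ∈ ℓ such that both lines R₁T and R₂T meet B in at least four points, then for every M ∈ ℓ one has |MR₁ ∩ B| = |MR₂ ∩ B|. (3) If R₁, R₂ ∈ B∖ℓ are each contained in exactly one bisecant of B and the common point of these two bisecants lies on ℓ, then for every M ∈ ℓ one has |MR₁ ∩ B| = |MR₂ ∩ B|. -/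

import Mathlib

/-! Common setup: the Desarguesian projective plane `PG(2,q)` over a finite field `F = GF(q)`.
Points are the projective points of `F³`; lines are the 2-dimensional linear subspaces of `F³`,
with incidence given by containment. -/

/-- Points of `PG(2,F)`. -/
abbrev PGPoint (F : Type*) [Field F] := Projectivization F (Fin 3 → F)

/-- Lines of `PG(2,F)`: the 2-dimensional linear subspaces of `F³`. -/
abbrev PGLine (F : Type*) [Field F] := {W : Submodule F (Fin 3 → F) // Module.finrank F W = 2}

/-- Incidence between a point and a line of `PG(2,F)`. -/
def pgMem {F : Type*} [Field F] (P : PGPoint F) (L : PGLine F) : Prop :=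
  P.submodule ≤ L.val

/-- The number of points of the point set `B` lying on the line `L`;
`L` is a *`k`-secant* of `B` if `nsec B L = k`, a *tangent* if `k = 1`,
a *bisecant* if `k = 2` and a *trisecant* if `k = 3`. -/
noncomputable def nsec {F : Type*} [Field F] (B : Set (PGPoint F)) (L : PGLine F) : ℕ :=
  {P ∈ B | pgMem P L}.ncard

/-- A blocking set: a point set meeting every line. -/
def isBlocking {F : Type*} [Field F] (B : Set (PGPoint F)) : Prop :=
  ∀ L : PGLine F, ∃ P ∈ B, pgMem P L

/-- A minimal blocking set: every point is essential. -/
def isMinimalBlocking {F : Type*} [Field F] (B : Set (PGPoint F)) : Prop :=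
  isBlocking B ∧ ∀ P ∈ B, ¬ isBlocking (B \ {P})

/-- `B` is a blocking set of Rédei type with Rédei line `ℓ`: a blocking set of size
`q + N ≤ 2q` such that `ℓ` meets `B` in exactly `N = |B| − q` points. -/
def isRedeiWithLine {F : Type*} [Field F] (q : ℕ) (B : Set (PGPoint F)) (ℓ : PGLine F) : Prop :=
  isBlocking B ∧ B.ncard ≤ 2 * q ∧ nsec B ℓ + q = B.ncard

/-- A semioval: through each of its points there passes exactly one tangent. -/
def isSemioval {F : Type*} [Field F] (S : Set (PGPoint F)) : Prop :=
  ∀ P ∈ S, ∃! t : PGLine F, pgMem P t ∧ nsec S t = 1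

open Polynomial in
/-- The sum of the values of a polynomial of degree at most `q - 1` over `GF(q)`. -/
theorem sum_eval_eq_neg_coeff {F : Type*} [Field F] [Fintype F] (P : F[X])
    (hP : P.natDegree ≤ Fintype.card F - 1) :
    ∑ y, P.eval y = - P.coeff (Fintype.card F - 1) := by
  classical
  have hlt : P.natDegree < Fintype.card F - 1 + 1 := by omega
  simp_rw [eval_eq_sum_range' hlt]
  rw [Finset.sum_comm, Finset.sum_range_succ, Finset.sum_eq_zero, zero_add, ← Finset.mul_sum]
  · have h1 : ∑ y : F, y ^ (Fintype.card F - 1) = -1 := by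
      have h2 : ∀ y : F, y ^ (Fintype.card F - 1) = 1 - if y = 0 then 1 else 0 := by
        intro y
        have := Fintype.one_lt_card (α := F)
        by_cases hy : y = 0
        · have h3 : Fintype.card F - 1 ≠ 0 := by omega
          simp [hy, h3]
        · simp [hy, FiniteField.pow_card_sub_one_eq_one y hy]
      simp_rw [h2]
      simp
    rw [h1, mul_neg_one]
  · intro i hi
    rw [← Finset.mul_sum, FiniteField.sum_pow_lt_card_sub_one F i (Finset.mem_range.mp hi),
      mul_zero]

open Polynomial in
/-- The monic polynomial whose roots, with multiplicity, are the values of `s`. -/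
noncomputable def slopePoly {F : Type*} [Field F] [Fintype F] [DecidableEq F]
    (s : Fˣ → F) : F[X] :=
  ((Finset.univ.val.map s).map fun a => X - C a).prod

open Polynomial in
theorem slopePoly_monic {F : Type*} [Field F] [Fintype F] [DecidableEq F] (s : Fˣ → F) :
    (slopePoly s).Monic :=
  monic_multiset_prod_of_monic _ _ fun a _ => monic_X_sub_C a

open Polynomial in
theorem natDegree_slopePoly {F : Type*} [Field F] [Fintype F] [DecidableEq F] (s : Fˣ → F) :
    (slopePoly s).natDegree = Fintype.card F - 1 := by
  rw [slopePoly, natDegree_multiset_prod_X_sub_C_eq_card, Multiset.card_map, Finset.card_val,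
    Finset.card_univ, Fintype.card_units]

open Polynomial in
theorem eval_slopePoly {F : Type*} [Field F] [Fintype F] [DecidableEq F] (s : Fˣ → F) (y : F) :
    (slopePoly s).eval y = ∏ x, (y - s x) := by
  rw [slopePoly, eval_multiset_prod, Multiset.map_map, Multiset.map_map]
  simp

open Polynomial in
theorem rootMultiplicity_slopePoly {F : Type*} [Field F] [Fintype F] [DecidableEq F]
    (s : Fˣ → F) (d : F) :
    (slopePoly s).rootMultiplicity d = (Finset.univ.filter fun x => s x = d).card := by
  rw [← count_roots, slopePoly, roots_multiset_prod_X_sub_C, Multiset.count_map]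
  simp [Finset.card, eq_comm]

/-- The slopes `s` avoid `d₀ ∈ D`, attain every other element of `D`, and satisfy
`∏ (y - s x) = 1` for `y ∉ D`. -/
structure IsSlopeSystem {F : Type*} [Field F] [Fintype F] [DecidableEq F] (D : Finset F) (d₀ : F)
    (s : Fˣ → F) : Prop where
  mem : d₀ ∈ D
  prod_eq_one : ∀ y ∉ D, ∏ x, (y - s x) = 1
  exists_eq : ∀ d ∈ D, d ≠ d₀ → ∃ x, s x = d
  ne : ∀ x, s x ≠ d₀

namespace IsSlopeSystem

variable {F : Type*} [Field F] [Fintype F] [DecidableEq F] {D : Finset F}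
  {d₀ d₁ d₂ : F} {s s₁ s₂ : Fˣ → F}

theorem eval_of_mem (hs : IsSlopeSystem D d₀ s) {d : F} (hd : d ∈ D) (hne : d ≠ d₀) :
    (slopePoly s).eval d = 0 := by
  obtain ⟨x, hx⟩ := hs.exists_eq d hd hne
  rw [eval_slopePoly, Finset.prod_eq_zero (Finset.mem_univ x)]
  rw [hx, sub_self]

theorem eval_of_notMem (hs : IsSlopeSystem D d₀ s) {y : F} (hy : y ∉ D) :
    (slopePoly s).eval y = 1 := by
  rw [eval_slopePoly, hs.prod_eq_one y hy]

theorem eval_ne_zero (hs : IsSlopeSystem D d₀ s) : (slopePoly s).eval d₀ ≠ 0 := by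
  rw [eval_slopePoly]
  exact Finset.prod_ne_zero_iff.mpr fun x _ => sub_ne_zero.mpr (hs.ne x).symm

theorem eval_eq (hs : IsSlopeSystem D d₀ s) : (slopePoly s).eval d₀ = D.card - 1 := by
  classical
  have h1 := sum_eval_eq_neg_coeff (slopePoly s) (natDegree_slopePoly s).le
  rw [← natDegree_slopePoly s, (slopePoly_monic s).coeff_natDegree,
    ← Finset.sum_add_sum_compl D, Finset.sum_eq_single_of_mem d₀ hs.mem
      (fun d hd hne => hs.eval_of_mem hd hne),
    Finset.sum_congr rfl (fun y hy => hs.eval_of_notMem (Finset.mem_compl.mp hy))] at h1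
  simp only [Finset.sum_const, nsmul_eq_mul, mul_one, Finset.card_compl] at h1
  rw [Nat.cast_sub (Finset.card_le_univ D), Nat.cast_card_eq_zero] at h1
  linear_combination h1

theorem card_ne_one (hs : IsSlopeSystem D d₀ s) : (D.card : F) ≠ 1 := by
  have h := hs.eval_ne_zero
  rw [hs.eval_eq] at h
  exact sub_ne_zero.mp h

open Polynomial in
theorem slopePoly_sub (h₁ : IsSlopeSystem D d₁ s₁) (h₂ : IsSlopeSystem D d₂ s₂) :
    slopePoly s₁ - slopePoly s₂ = C ((D.card : F) - 1) *
      ((X - C d₂) ^ (Fintype.card F - 1) - (X - C d₁) ^ (Fintype.card F - 1)) := by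
  classical
  have hq := Fintype.one_lt_card (α := F)
  have hpow : ∀ a y : F, ((X - C a) ^ (Fintype.card F - 1) : F[X]).eval y
      = if y = a then 0 else 1 := by
    intro a y
    have h3 : Fintype.card F - 1 ≠ 0 := by omega
    by_cases hy : y = a
    · simp [hy, h3]
    · simp [hy, FiniteField.pow_card_sub_one_eq_one _ (sub_ne_zero.mpr hy)]
  have hval : ∀ {d : F} {s : Fˣ → F}, IsSlopeSystem D d s → ∀ y, (slopePoly s).eval y
      = (if y ∈ D then 0 else 1) + if y = d then (D.card : F) - 1 else 0 := by
    intro d s hs y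
    by_cases hy : y = d
    · subst hy; simp [hs.mem, hs.eval_eq]
    · by_cases hyD : y ∈ D
      · simp [hy, hyD, hs.eval_of_mem hyD hy]
      · simp [hy, hyD, hs.eval_of_notMem hyD]
  refine eq_of_natDegree_lt_card_of_eval_eq _ _ (f := (id : F → F)) Function.injective_id ?_ ?_
  · intro y
    simp only [id, eval_sub, eval_mul, eval_C, hpow, hval h₁, hval h₂]
    split_ifs <;> ring
  · have hdeg : ∀ a : F, ((X - C a) ^ (Fintype.card F - 1) : F[X]).natDegree
        ≤ Fintype.card F - 1 := fun a => by simp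
    have hL := natDegree_sub_le_of_le (natDegree_slopePoly s₁).le (natDegree_slopePoly s₂).le
    have hR := (natDegree_C_mul_le ((D.card : F) - 1) _).trans
      (natDegree_sub_le_of_le (hdeg d₂) (hdeg d₁))
    rw [max_self] at hL hR
    exact max_lt (by omega) (by omega)

/-- Slope systems avoiding the same element of `D` have the same multiplicities. -/
theorem card_filter_eq (h₁ : IsSlopeSystem D d₀ s₁)
    (h₂ : IsSlopeSystem D d₀ s₂) (d : F) :
    (Finset.univ.filter fun x => s₁ x = d).card = (Finset.univ.filter fun x => s₂ x = d).card := by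
  have h := slopePoly_sub h₁ h₂
  rw [sub_self, mul_zero, sub_eq_zero] at h
  rw [← rootMultiplicity_slopePoly, ← rootMultiplicity_slopePoly, h]

open Polynomial in
/-- Two slope systems with a common multiple slope avoid the same element of `D`. -/
theorem eq_of_two_le_card_filter (h₁ : IsSlopeSystem D d₁ s₁)
    (h₂ : IsSlopeSystem D d₂ s₂) {t : F}
    (ht₁ : 2 ≤ (Finset.univ.filter fun x => s₁ x = t).card)
    (ht₂ : 2 ≤ (Finset.univ.filter fun x => s₂ x = t).card) : d₁ = d₂ := by
  have hq := Fintype.one_lt_card (α := F)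
  have hne : ∀ {d : F} {s : Fˣ → F}, IsSlopeSystem D d s →
      2 ≤ (Finset.univ.filter fun x => s x = t).card → t - d ≠ 0 := by
    intro d s hs hc
    obtain ⟨x, hx⟩ := Finset.card_pos.mp (by omega : 0 < (Finset.univ.filter fun x => s x = t).card)
    exact sub_ne_zero.mpr ((Finset.mem_filter.mp hx).2 ▸ hs.ne x)
  have hn₁ := hne h₁ ht₁
  have hn₂ := hne h₂ ht₂
  rw [← rootMultiplicity_slopePoly, le_rootMultiplicity_iff (slopePoly_monic _).ne_zero]
    at ht₁ ht₂
  obtain ⟨k, hk⟩ := dvd_sub ht₁ ht₂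
  rw [slopePoly_sub h₁ h₂] at hk
  have hder := congrArg (fun P => (derivative P).eval t) hk
  simp only [derivative_mul, derivative_sub, derivative_X_sub_C_pow, derivative_C, eval_add,
    eval_mul, eval_sub, eval_pow, eval_X, eval_C, sub_self, zero_mul, zero_add,
    Nat.cast_sub hq.le, Nat.cast_card_eq_zero] at hder
  have hinv : ∀ {a : F}, a ≠ 0 → a ^ (Fintype.card F - 1 - 1) = a⁻¹ := by
    intro a ha
    refine eq_inv_of_mul_eq_one_left ?_
    rw [← pow_succ, Nat.sub_add_cancel (by omega),
      FiniteField.pow_card_sub_one_eq_one a ha]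
  rw [hinv hn₁, hinv hn₂] at hder
  have hc := sub_ne_zero.mpr h₁.card_ne_one
  have h3 : (t - d₂)⁻¹ = (t - d₁)⁻¹ := by
    apply mul_left_cancel₀ hc
    rw [Nat.cast_one, zero_sub] at hder
    linear_combination -hder
  have := inv_injective h3
  linear_combination this

end IsSlopeSystem

section Cone

variable {F : Type*} [Field F]

theorem pgMem_mk {v : Fin 3 → F} (hv : v ≠ 0) (L : PGLine F) :
    pgMem (Projectivization.mk F v hv) L ↔ v ∈ L.val := by
  rw [pgMem, Projectivization.submodule_mk, Submodule.span_singleton_le_iff_mem]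

/-- The nonzero vectors representing a point of `B`. -/
def pgCone (B : Set (PGPoint F)) : Set (Fin 3 → F) :=
  {v | ∃ hv : v ≠ 0, Projectivization.mk F v hv ∈ B}

theorem mk_mem_iff {B : Set (PGPoint F)} {v : Fin 3 → F} (hv : v ≠ 0) :
    Projectivization.mk F v hv ∈ B ↔ v ∈ pgCone B :=
  ⟨fun h => ⟨hv, h⟩, fun h => h.2⟩

theorem smul_mem_pgCone_iff {B : Set (PGPoint F)} {a : F} (ha : a ≠ 0) {v : Fin 3 → F} :
    a • v ∈ pgCone B ↔ v ∈ pgCone B := by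
  by_cases hv : v = 0
  · simp [hv]
  · have hav : a • v ≠ 0 := smul_ne_zero ha hv
    rw [← mk_mem_iff hv, ← mk_mem_iff hav,
      (Projectivization.mk_eq_mk_iff' F (a • v) v hav hv).mpr ⟨a, rfl⟩]

theorem ne_zero_of_mem_pgCone {B : Set (PGPoint F)} {v : Fin 3 → F} (h : v ∈ pgCone B) : v ≠ 0 :=
  h.1

theorem finrank_span_pair_eq_two {u v : Fin 3 → F}
    (huv : ∀ a b : F, a • u + b • v = 0 → a = 0 ∧ b = 0) :
    Module.finrank F (Submodule.span F ({u, v} : Set (Fin 3 → F))) = 2 := by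
  have h := finrank_span_eq_card (LinearIndependent.pair_iff.mpr huv)
  rwa [Matrix.range_cons_cons_empty, Fintype.card_fin] at h

theorem isBlocking.exists_mem_pgCone {B : Set (PGPoint F)} (hB : isBlocking B) {u v : Fin 3 → F}
    (huv : ∀ a b : F, a • u + b • v = 0 → a = 0 ∧ b = 0) :
    ∃ a b : F, a • u + b • v ∈ pgCone B := by
  obtain ⟨P, hP, hPL⟩ := hB ⟨_, finrank_span_pair_eq_two huv⟩
  induction P using Projectivization.ind with
  | h w hw =>
    rw [pgMem_mk, Submodule.mem_span_pair] at hPL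
    obtain ⟨a, b, rfl⟩ := hPL
    exact ⟨a, b, hw, hP⟩

theorem exists_add_smul_of_finrank_succ {W W' : Submodule F (Fin 3 → F)} {x : Fin 3 → F}
    (hW : W ≤ W') (hx' : x ∈ W') (hx : x ∉ W)
    (hfin : Module.finrank F W' = Module.finrank F W + 1) {v : Fin 3 → F} (hv : v ∈ W') :
    ∃ w ∈ W, ∃ a : F, w + a • x = v := by
  have hlt : W < W ⊔ Submodule.span F {x} :=
    lt_of_le_of_ne le_sup_left fun h => hx <|
      h ▸ Submodule.mem_sup_right (Submodule.mem_span_singleton_self x)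
  have hle : W ⊔ Submodule.span F {x} ≤ W' :=
    sup_le hW ((Submodule.span_singleton_le_iff_mem _ _).mpr hx')
  have heq := Submodule.eq_of_le_of_finrank_le hle
    (hfin ▸ Submodule.finrank_lt_finrank_of_lt hlt)
  rw [← heq, Submodule.mem_sup] at hv
  obtain ⟨w, hw, y, hy, rfl⟩ := hv
  obtain ⟨a, rfl⟩ := Submodule.mem_span_singleton.mp hy
  exact ⟨w, hw, a, rfl⟩

/-- `e, g` is a basis of the line `ℓ`. -/
structure IsLineBasis (ℓ : PGLine F) (e g : Fin 3 → F) : Prop where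
  mem_iff : ∀ v, v ∈ ℓ.val ↔ ∃ b c : F, b • e + c • g = v
  indep : ∀ b c : F, b • e + c • g = 0 → b = 0 ∧ c = 0

theorem exists_isLineBasis (ℓ : PGLine F) {g : Fin 3 → F} (hg : g ≠ 0) (hgℓ : g ∈ ℓ.val) :
    ∃ e, IsLineBasis ℓ e g := by
  have hle : Submodule.span F {g} ≤ ℓ.val := (Submodule.span_singleton_le_iff_mem _ _).mpr hgℓ
  have h1 : Module.finrank F (Submodule.span F {g}) = 1 := finrank_span_singleton hg
  obtain ⟨e, heℓ, heg⟩ : ∃ e ∈ ℓ.val, e ∉ Submodule.span F {g} := by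
    by_contra! h
    have h2 := ℓ.2
    rw [le_antisymm (show ℓ.val ≤ Submodule.span F {g} from h) hle, h1] at h2
    omega
  refine ⟨e, fun v => ⟨fun hv => ?_, ?_⟩, fun b c h => ?_⟩
  · obtain ⟨w, hw, a, rfl⟩ :=
      exists_add_smul_of_finrank_succ hle heℓ heg (by rw [h1, ℓ.2]) hv
    obtain ⟨c, rfl⟩ := Submodule.mem_span_singleton.mp hw
    exact ⟨a, c, add_comm _ _⟩
  · rintro ⟨b, c, rfl⟩
    exact add_mem (Submodule.smul_mem _ _ heℓ) (Submodule.smul_mem _ _ hgℓ)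
  · have hb : b = 0 := by
      by_contra hb
      refine heg ((Submodule.smul_mem_iff _ hb).mp ?_)
      rw [eq_neg_of_add_eq_zero_left h]
      exact neg_mem (Submodule.smul_mem _ _ (Submodule.mem_span_singleton_self g))
    refine ⟨hb, ?_⟩
    rw [hb, zero_smul, zero_add] at h
    exact (smul_eq_zero.mp h).resolve_right hg

namespace IsLineBasis

variable {ℓ : PGLine F} {e g r : Fin 3 → F}

theorem left_mem (hb : IsLineBasis ℓ e g) : e ∈ ℓ.val := (hb.mem_iff e).mpr ⟨1, 0, by simp⟩

theorem right_mem (hb : IsLineBasis ℓ e g) : g ∈ ℓ.val := (hb.mem_iff g).mpr ⟨0, 1, by simp⟩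

theorem add_smul_ne_zero (hb : IsLineBasis ℓ e g) (d : F) : e + d • g ≠ 0 := fun h => by
  simpa using hb.indep 1 d (by simpa using h)

theorem add_smul_mem (hb : IsLineBasis ℓ e g) (d : F) : e + d • g ∈ ℓ.val :=
  add_mem hb.left_mem (Submodule.smul_mem _ _ hb.right_mem)

theorem comb_mem_iff (hb : IsLineBasis ℓ e g) (hr : r ∉ ℓ.val) (a b c : F) :
    a • r + b • e + c • g ∈ ℓ.val ↔ a = 0 := by
  have hℓ : b • e + c • g ∈ ℓ.val := (hb.mem_iff _).mpr ⟨b, c, rfl⟩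
  rw [add_assoc, Submodule.add_mem_iff_left _ hℓ]
  refine ⟨fun h => by_contra fun ha => hr ((Submodule.smul_mem_iff _ ha).mp h), ?_⟩
  rintro rfl
  simp

theorem comb_eq_zero (hb : IsLineBasis ℓ e g) (hr : r ∉ ℓ.val) {a b c : F}
    (h : a • r + b • e + c • g = 0) : a = 0 ∧ b = 0 ∧ c = 0 := by
  have ha : a = 0 := (hb.comb_mem_iff hr a b c).mp (h ▸ zero_mem _)
  refine ⟨ha, hb.indep b c ?_⟩
  simpa [ha] using h

theorem exists_comb (hb : IsLineBasis ℓ e g) (hr : r ∉ ℓ.val) (v : Fin 3 → F) :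
    ∃ a b c : F, a • r + b • e + c • g = v := by
  obtain ⟨w, hw, a, rfl⟩ := exists_add_smul_of_finrank_succ (W := ℓ.val) (W' := ⊤) (x := r)
    le_top trivial hr (by rw [ℓ.2, finrank_top, Module.finrank_fin_fun]) (v := v) trivial
  obtain ⟨b, c, rfl⟩ := (hb.mem_iff w).mp hw
  exact ⟨a, b, c, by abel⟩

theorem affine_ne_zero (hb : IsLineBasis ℓ e g) (hr : r ∉ ℓ.val) (x z : F) :
    r + x • e + z • g ≠ 0 := fun h => by
  simpa using (hb.comb_eq_zero hr (a := 1) (b := x) (c := z) (by simpa using h)).1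

theorem not_mem_of_mem (hb : IsLineBasis ℓ e g) (hr : r ∉ ℓ.val) {L : PGLine F}
    (hrL : r ∈ L.val) (heL : e ∈ L.val) : g ∉ L.val := fun hgL => by
  have htop : L.val = ⊤ := by
    rw [eq_top_iff]
    rintro v -
    obtain ⟨a, b, c, rfl⟩ := hb.exists_comb hr v
    exact add_mem (add_mem (Submodule.smul_mem _ _ hrL) (Submodule.smul_mem _ _ heL))
      (Submodule.smul_mem _ _ hgL)
  have h2 := L.2
  rw [htop, finrank_top, Module.finrank_fin_fun] at h2
  omega

theorem mem_iff_of_right_mem (hb : IsLineBasis ℓ e g) (hr : r ∉ ℓ.val) {L : PGLine F}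
    (hrL : r ∈ L.val) (hgL : g ∈ L.val) (a b c : F) :
    a • r + b • e + c • g ∈ L.val ↔ b = 0 := by
  rw [Submodule.add_mem_iff_left _ (Submodule.smul_mem _ _ hgL),
    Submodule.add_mem_iff_right _ (Submodule.smul_mem _ _ hrL)]
  refine ⟨fun h => by_contra fun h0 => ?_, ?_⟩
  · exact hb.not_mem_of_mem hr hrL ((Submodule.smul_mem_iff _ h0).mp h) hgL
  · rintro rfl
    simp

theorem mem_iff_of_add_smul_mem (hb : IsLineBasis ℓ e g) (hr : r ∉ ℓ.val) {L : PGLine F} {d : F}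
    (hrL : r ∈ L.val) (hdL : e + d • g ∈ L.val) (a b c : F) :
    a • r + b • e + c • g ∈ L.val ↔ c = d * b := by
  have h1 : a • r + b • e + c • g = (a • r + b • (e + d • g)) + (c - d * b) • g := by module
  rw [h1, Submodule.add_mem_iff_right _
    (add_mem (Submodule.smul_mem _ _ hrL) (Submodule.smul_mem _ _ hdL)), ← sub_eq_zero]
  refine ⟨fun h => by_contra fun h0 => ?_, fun h => by simp [h]⟩
  have hgL := (Submodule.smul_mem_iff _ h0).mp h
  refine hb.not_mem_of_mem hr hrL ?_ hgL
  simpa using sub_mem hdL (Submodule.smul_mem _ d hgL)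

theorem eq_smul_or_eq_smul_add (hb : IsLineBasis ℓ e g) {v : Fin 3 → F} (hv : v ≠ 0)
    (hvℓ : v ∈ ℓ.val) :
    (∃ c : F, c ≠ 0 ∧ v = c • g) ∨ ∃ b d : F, b ≠ 0 ∧ v = b • (e + d • g) := by
  obtain ⟨b, c, rfl⟩ := (hb.mem_iff v).mp hvℓ
  by_cases hb0 : b = 0
  · rw [hb0, zero_smul, zero_add] at hv ⊢
    exact Or.inl ⟨c, fun hc => hv (by simp [hc]), rfl⟩
  · exact Or.inr ⟨b, b⁻¹ * c, hb0, by rw [smul_add, smul_smul, mul_inv_cancel_left₀ hb0]⟩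

end IsLineBasis

theorem exists_line_of_notMem {ℓ : PGLine F} {r v : Fin 3 → F} (hr : r ∉ ℓ.val) (hv : v ≠ 0)
    (hvℓ : v ∈ ℓ.val) : ∃ L : PGLine F, r ∈ L.val ∧ v ∈ L.val := by
  have hfin : Module.finrank F (Submodule.span F ({r, v} : Set (Fin 3 → F))) = 2 := by
    refine finrank_span_pair_eq_two fun a b h => ?_
    have ha : a = 0 := by
      by_contra ha
      refine hr ((Submodule.smul_mem_iff _ ha).mp ?_)
      rw [eq_neg_of_add_eq_zero_left h]
      exact neg_mem (Submodule.smul_mem _ _ hvℓ)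
    rw [ha, zero_smul, zero_add] at h
    exact ⟨ha, (smul_eq_zero.mp h).resolve_right hv⟩
  exact ⟨⟨_, hfin⟩, Submodule.subset_span (by simp), Submodule.subset_span (by simp)⟩

/-- Two lines of the plane have a common point. -/
theorem exists_mem_inter (L ℓ : PGLine F) : ∃ v : Fin 3 → F, v ≠ 0 ∧ v ∈ L.val ∧ v ∈ ℓ.val := by
  have h1 := Submodule.finrank_sup_add_finrank_inf_eq L.val ℓ.val
  have h2 : Module.finrank F ↥(L.val ⊔ ℓ.val) ≤ 3 := by
    simpa using Submodule.finrank_le (L.val ⊔ ℓ.val)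
  rw [L.2, ℓ.2] at h1
  have h3 : L.val ⊓ ℓ.val ≠ ⊥ := fun h => by
    rw [h, finrank_bot] at h1
    omega
  obtain ⟨v, hv, hv0⟩ := Submodule.exists_mem_ne_zero_of_ne_bot h3
  exact ⟨v, hv0, hv.1, hv.2⟩

end Cone

section Redei

variable {F : Type*} [Field F] [Fintype F]

/-- Some point of the Rédei line is not in the blocking set. -/
theorem isRedeiWithLine.exists_notMem {B : Set (PGPoint F)} {ℓ : PGLine F}
    (hB : isRedeiWithLine (Fintype.card F) B ℓ) :
    ∃ g : Fin 3 → F, g ≠ 0 ∧ g ∈ ℓ.val ∧ g ∉ pgCone B := by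
  by_contra! h
  obtain ⟨-, hle, hsum⟩ := hB
  have hcard := Projectivization.card_of_finrank_two F ℓ.val ℓ.2
  have hinj := Projectivization.map_injective ℓ.val.subtype ℓ.val.injective_subtype
  have hsub : Set.range (Projectivization.map ℓ.val.subtype ℓ.val.injective_subtype)
      ⊆ {P ∈ B | pgMem P ℓ} := by
    rintro _ ⟨P, rfl⟩
    induction P using Projectivization.ind with
    | h v hv =>
      have hv' : ℓ.val.subtype v ≠ 0 := by simpa using hv
      rw [Projectivization.map_mk]
      exact ⟨(mk_mem_iff hv').mpr (h _ hv' v.2), (pgMem_mk hv' ℓ).mpr v.2⟩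
  have h1 : _ ≤ nsec B ℓ := Set.ncard_le_ncard hsub (Set.toFinite _)
  rw [Set.ncard_range_of_injective hinj, hcard, Nat.card_eq_fintype_card] at h1
  omega

/-- The points of `B` on a line `ℓ`, counted by slope. -/
theorem card_filter_pgCone {B : Set (PGPoint F)} {ℓ : PGLine F} {e g : Fin 3 → F}
    (hb : IsLineBasis ℓ e g) (hg : g ∉ pgCone B) [DecidablePred fun d : F => e + d • g ∈ pgCone B] :
    (Finset.univ.filter fun d : F => e + d • g ∈ pgCone B).card = nsec B ℓ := by
  let φ : F → PGPoint F := fun d => Projectivization.mk F (e + d • g) (hb.add_smul_ne_zero d)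
  have hφ : Function.Injective φ := by
    intro d d' h
    obtain ⟨a, ha⟩ := (Projectivization.mk_eq_mk_iff' F _ _ _ _).mp h
    have h1 := hb.indep (a - 1) (a * d' - d) (by
      rw [← sub_eq_zero.mpr ha]; module)
    have ha1 : a = 1 := sub_eq_zero.mp h1.1
    rw [ha1] at h1
    linear_combination -h1.2
  have himg : {P ∈ B | pgMem P ℓ} = φ '' {d | e + d • g ∈ pgCone B} := by
    ext P
    constructor
    · induction P using Projectivization.ind with
      | h v hv =>
        rintro ⟨hvB, hvℓ⟩
        rw [mk_mem_iff] at hvB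
        rw [pgMem_mk] at hvℓ
        obtain ⟨c, hc, rfl⟩ | ⟨b, d, hb0, rfl⟩ := hb.eq_smul_or_eq_smul_add hv hvℓ
        · exact absurd ((smul_mem_pgCone_iff hc).mp hvB) hg
        · exact ⟨d, (smul_mem_pgCone_iff hb0).mp hvB,
            ((Projectivization.mk_eq_mk_iff' F _ _ _ _).mpr ⟨b, rfl⟩).symm⟩
    · rintro ⟨d, hd, rfl⟩
      exact ⟨(mk_mem_iff _).mpr hd, (pgMem_mk _ ℓ).mpr (hb.add_smul_mem d)⟩
  rw [nsec, himg, Set.ncard_image_of_injective _ hφ, ← Set.ncard_coe_finset]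
  simp

/-- The affine part of a Rédei type blocking set is the graph of a function. -/
theorem isRedeiWithLine.exists_graph {B : Set (PGPoint F)} {ℓ : PGLine F} {e g r : Fin 3 → F}
    (hB : isRedeiWithLine (Fintype.card F) B ℓ) (hb : IsLineBasis ℓ e g) (hr : r ∉ ℓ.val)
    (hg : g ∉ pgCone B) :
    ∃ f : F → F, (∀ x z : F, r + x • e + z • g ∈ pgCone B ↔ z = f x) ∧
      ∀ L : PGLine F, nsec B L = {x : F | r + x • e + f x • g ∈ L.val}.ncard
        + {P ∈ B | pgMem P ℓ ∧ pgMem P L}.ncard := by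
  have hex : ∀ x : F, ∃ z : F, r + x • e + z • g ∈ pgCone B := by
    intro x
    obtain ⟨a, b, hab⟩ := hB.1.exists_mem_pgCone (u := r + x • e) (v := g) fun a b h => by
      have := hb.comb_eq_zero hr (a := a) (b := a * x) (c := b) (by rw [← h]; module)
      exact ⟨this.1, this.2.2⟩
    have ha : a ≠ 0 := by
      rintro rfl
      rw [zero_smul, zero_add] at hab
      exact hg ((smul_mem_pgCone_iff fun hc =>
        ne_zero_of_mem_pgCone hab (by simp [hc])).mp hab)
    refine ⟨a⁻¹ * b, (smul_mem_pgCone_iff ha).mp ?_⟩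
    rwa [smul_add, smul_smul, mul_inv_cancel_left₀ ha]
  choose f hf using hex
  let φ : F → PGPoint F := fun x =>
    Projectivization.mk F (r + x • e + f x • g) (hb.affine_ne_zero hr x (f x))
  have hinj : ∀ {x z x' z' : F},
      Projectivization.mk F (r + x • e + z • g) (hb.affine_ne_zero hr x z)
        = Projectivization.mk F (r + x' • e + z' • g) (hb.affine_ne_zero hr x' z') →
      x = x' ∧ z = z' := by
    intro x z x' z' h
    obtain ⟨a, ha⟩ := (Projectivization.mk_eq_mk_iff' F _ _ _ _).mp h
    obtain ⟨h1, h2, h3⟩ := hb.comb_eq_zero hr (a := a - 1) (b := a * x' - x) (c := a * z' - z) (by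
      rw [← sub_eq_zero.mpr ha]; module)
    have ha1 : a = 1 := sub_eq_zero.mp h1
    rw [ha1] at h2 h3
    exact ⟨by linear_combination -h2, by linear_combination -h3⟩
  have hφ : Function.Injective φ := fun x x' h => (hinj h).1
  have hφB : ∀ x, φ x ∈ B := fun x => (mk_mem_iff _).mpr (hf x)
  have hmemℓ : ∀ x z : F, r + x • e + z • g ∉ ℓ.val := fun x z h => by
    have := (hb.comb_mem_iff hr 1 x z).mp (by simpa using h)
    exact one_ne_zero this
  have hrange : Set.range φ = B \ {P ∈ B | pgMem P ℓ} := by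
    refine Set.eq_of_subset_of_ncard_le ?_ ?_ (Set.toFinite _)
    · rintro _ ⟨x, rfl⟩
      exact ⟨hφB x, fun h => hmemℓ x (f x) ((pgMem_mk _ ℓ).mp h.2)⟩
    · rw [Set.ncard_range_of_injective hφ, Nat.card_eq_fintype_card,
        Set.ncard_sdiff (Set.sep_subset _ _) (Set.toFinite _), ← hB.2.2, nsec]
      omega
  refine ⟨f, fun x z => ⟨fun h => ?_, fun h => h ▸ hf x⟩, fun L => ?_⟩
  · have hmem : Projectivization.mk F (r + x • e + z • g) (hb.affine_ne_zero hr x z)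
        ∈ Set.range φ := by
      rw [hrange]
      exact ⟨(mk_mem_iff _).mpr h, fun h' => hmemℓ x z ((pgMem_mk _ ℓ).mp h'.2)⟩
    obtain ⟨x', hx'⟩ := hmem
    obtain ⟨rfl, h2⟩ := hinj hx'
    exact h2.symm
  · have hset : {P ∈ B | pgMem P L} = φ '' {x : F | r + x • e + f x • g ∈ L.val}
        ∪ {P ∈ B | pgMem P ℓ ∧ pgMem P L} := by
      ext P
      constructor
      · rintro ⟨hPB, hPL⟩
        by_cases hPℓ : pgMem P ℓ
        · exact Or.inr ⟨hPB, hPℓ, hPL⟩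
        · have hP : P ∈ Set.range φ := by
            rw [hrange]
            exact ⟨hPB, fun h => hPℓ h.2⟩
          obtain ⟨x, rfl⟩ := hP
          exact Or.inl ⟨x, (pgMem_mk _ L).mp hPL, rfl⟩
      · rintro (⟨x, hx, rfl⟩ | ⟨h1, -, h3⟩)
        · exact ⟨hφB x, (pgMem_mk _ L).mpr hx⟩
        · exact ⟨h1, h3⟩
    rw [nsec, hset, Set.ncard_union_eq _ (Set.toFinite _) (Set.toFinite _),
      Set.ncard_image_of_injective _ hφ]
    rw [Set.disjoint_left]
    rintro _ ⟨x, -, rfl⟩ h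
    exact hmemℓ x (f x) ((pgMem_mk _ ℓ).mp h.2.1)

variable [DecidableEq F]

open Classical in
/-- The slopes of the lines joining a point `r ∉ ℓ` of `B` to the other points of `B` off `ℓ`. -/
theorem isRedeiWithLine.exists_slopes {B : Set (PGPoint F)} {ℓ : PGLine F} {e g r : Fin 3 → F}
    (hB : isRedeiWithLine (Fintype.card F) B ℓ) (hb : IsLineBasis ℓ e g) (hr : r ∉ ℓ.val)
    (hg : g ∉ pgCone B) (hrB : r ∈ pgCone B) :
    ∃ s : Fˣ → F, (∀ y : F, e + y • g ∉ pgCone B → ∏ x, (y - s x) = 1) ∧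
      (∀ L : PGLine F, r ∈ L.val → g ∈ L.val → nsec B L = 1) ∧
      ∀ (L : PGLine F) (d : F), r ∈ L.val → e + d • g ∈ L.val →
        nsec B L = (Finset.univ.filter fun x => s x = d).card + 1
          + if e + d • g ∈ pgCone B then 1 else 0 := by
  obtain ⟨f, hf, hcount⟩ := hB.exists_graph hb hr hg
  have hf0 : f 0 = 0 := ((hf 0 0).mp (by simpa using hrB)).symm
  refine ⟨fun x => f x / x, fun y hy => ?_, fun L hrL hgL => ?_, fun L d hrL hdL => ?_⟩
  · have hsurj : Function.Surjective fun x => x * y - f x := by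
      intro w
      obtain ⟨a, b, hab⟩ := hB.1.exists_mem_pgCone (u := r + (-w) • g) (v := e + y • g)
        fun a b h => by
          have := hb.comb_eq_zero hr (a := a) (b := b) (c := b * y - a * w) (by rw [← h]; module)
          exact ⟨this.1, this.2.1⟩
      have ha : a ≠ 0 := by
        rintro rfl
        rw [zero_smul, zero_add] at hab
        exact hy ((smul_mem_pgCone_iff fun hc =>
          ne_zero_of_mem_pgCone hab (by simp [hc])).mp hab)
      have heq : a • (r + (-w) • g) + b • (e + y • g)
          = a • (r + (a⁻¹ * b) • e + (a⁻¹ * b * y - w) • g) := by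
        have hab' : a * (a⁻¹ * b) = b := mul_inv_cancel_left₀ ha b
        generalize a⁻¹ * b = c at hab' ⊢
        subst hab'
        module
      rw [heq, smul_mem_pgCone_iff ha, hf] at hab
      exact ⟨a⁻¹ * b, by simp only [← hab]; ring⟩
    have hbij := Finite.injective_iff_surjective.mpr hsurj
    have hne : ∀ x : Fˣ, (x : F) * y - f x ≠ 0 := fun x h =>
      x.ne_zero (hbij (by simpa [hf0] using h))
    have hperm : ∏ x : Fˣ, ((x : F) * y - f x) = ∏ x : Fˣ, (x : F) := by
      let τ : Fˣ → Fˣ := fun x => Units.mk0 _ (hne x)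
      have hτ : Function.Injective τ := fun x x' h => Units.ext (hbij (congrArg Units.val h))
      exact Fintype.prod_bijective τ (Finite.injective_iff_bijective.mp hτ) _ _ fun x => rfl
    have hdiv : ∀ x : Fˣ, y - f x / x = ((x : F) * y - f x) / x := fun x => by
      field_simp
    simp_rw [hdiv]
    rw [Finset.prod_div_distrib, hperm, div_self]
    exact Finset.prod_ne_zero_iff.mpr fun x _ => x.ne_zero
  · have h1 : {x : F | r + x • e + f x • g ∈ L.val} = {0} := by
      ext x
      simpa using hb.mem_iff_of_right_mem hr hrL hgL 1 x (f x)
    have h2 : {P ∈ B | pgMem P ℓ ∧ pgMem P L} = ∅ := by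
      rw [Set.eq_empty_iff_forall_notMem]
      intro P
      induction P using Projectivization.ind with
      | h v hv =>
        rintro ⟨hvB, hvℓ, hvL⟩
        rw [mk_mem_iff] at hvB
        rw [pgMem_mk] at hvℓ hvL
        obtain ⟨b, c, rfl⟩ := (hb.mem_iff v).mp hvℓ
        have hb0 : b = 0 := (hb.mem_iff_of_right_mem hr hrL hgL 0 b c).mp (by simpa using hvL)
        rw [hb0, zero_smul, zero_add] at hvB
        exact hg ((smul_mem_pgCone_iff fun hc =>
          ne_zero_of_mem_pgCone hvB (by simp [hc])).mp hvB)
    rw [hcount, h1, h2]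
    simp
  · have h1 : {x : F | r + x • e + f x • g ∈ L.val}
        = insert 0 (Units.val '' {x : Fˣ | f x / x = d}) := by
      ext x
      have hx := hb.mem_iff_of_add_smul_mem hr hrL hdL 1 x (f x)
      rw [one_smul] at hx
      rw [Set.mem_ofPred_eq, hx, Set.mem_insert_iff]
      by_cases hx0 : x = 0
      · simp [hx0, hf0]
      · constructor
        · intro h
          exact Or.inr ⟨Units.mk0 x hx0, by simp [h, hx0], rfl⟩
        · rintro (h | ⟨x, hx', rfl⟩)
          · exact absurd h hx0
          · exact (div_eq_iff x.ne_zero).mp hx'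
    have h2 : {P ∈ B | pgMem P ℓ ∧ pgMem P L}
        = if e + d • g ∈ pgCone B then
            {Projectivization.mk F (e + d • g) (hb.add_smul_ne_zero d)} else ∅ := by
      have hkey : ∀ P : PGPoint F, pgMem P ℓ → pgMem P L →
          P = Projectivization.mk F (e + d • g) (hb.add_smul_ne_zero d) := by
        intro P
        induction P using Projectivization.ind with
        | h v hv =>
          intro hvℓ hvL
          rw [pgMem_mk] at hvℓ hvL
          obtain ⟨b, c, rfl⟩ := (hb.mem_iff v).mp hvℓ
          have hc := (hb.mem_iff_of_add_smul_mem hr hrL hdL 0 b c).mp (by simpa using hvL)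
          refine (Projectivization.mk_eq_mk_iff' F _ _ _ _).mpr ⟨b, ?_⟩
          rw [hc]
          module
      ext P
      split_ifs with hd
      · constructor
        · rintro ⟨-, hPℓ, hPL⟩
          exact hkey P hPℓ hPL
        · rintro rfl
          exact ⟨(mk_mem_iff _).mpr hd, (pgMem_mk _ _).mpr (hb.add_smul_mem d),
            (pgMem_mk _ _).mpr hdL⟩
      · refine ⟨fun ⟨hPB, hPℓ, hPL⟩ => hd ?_, fun h => h.elim⟩
        rw [hkey P hPℓ hPL] at hPB
        exact (mk_mem_iff _).mp hPB
    rw [hcount, h1, h2, Set.ncard_insert_of_notMem (by simp) (Set.toFinite _),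
      Set.ncard_image_of_injective _ Units.val_injective, ← Set.ncard_coe_finset]
    congr 1
    · simp
    · split_ifs <;> simp

/-- The values of `s` are the slopes of the lines joining `R` to the other points of `B` off `ℓ`,
and `D` is the set of slopes of the points of `B` on `ℓ`, with respect to the basis `e, g`
of `ℓ`. -/
structure IsSlopesAt (B : Set (PGPoint F)) (e g : Fin 3 → F) (D : Finset F) (R : PGPoint F)
    (s : Fˣ → F) : Prop where
  nsec_eq_one : ∀ L : PGLine F, pgMem R L → g ∈ L.val → nsec B L = 1
  nsec_eq : ∀ (L : PGLine F) (d : F), pgMem R L → e + d • g ∈ L.val →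
    nsec B L = (Finset.univ.filter fun x => s x = d).card + 1 + if d ∈ D then 1 else 0

/-- If `b` is the only bisecant through a point `r ∉ ℓ` of `B`, then the slopes at `r`
form a slope system avoiding the slope of `b`. -/
theorem isRedeiWithLine.exists_isSlopeSystem {B : Set (PGPoint F)} {ℓ b : PGLine F}
    {e g : Fin 3 → F} {R : PGPoint F} (hB : isRedeiWithLine (Fintype.card F) B ℓ)
    (hb : IsLineBasis ℓ e g) (hg : g ∉ pgCone B) (hRB : R ∈ B) (hRℓ : ¬ pgMem R ℓ)
    (hRb : pgMem R b) (hb2 : nsec B b = 2)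
    (huniq : ∀ L : PGLine F, pgMem R L ∧ nsec B L = 2 → L = b)
    {D : Finset F} (hD : ∀ d, d ∈ D ↔ e + d • g ∈ pgCone B) :
    ∃ (s : Fˣ → F) (d₀ : F), IsSlopeSystem D d₀ s ∧ IsSlopesAt B e g D R s ∧
      ∀ d, e + d • g ∈ b.val → d = d₀ := by
  classical
  induction R using Projectivization.ind with | h r hr0 => ?_
  rw [mk_mem_iff] at hRB
  rw [pgMem_mk] at hRℓ hRb
  obtain ⟨s, hs, h1, h2⟩ := hB.exists_slopes hb hRℓ hg hRB
  simp_rw [← hD] at hs h2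
  obtain ⟨v, hv, hvb, hvℓ⟩ := exists_mem_inter b ℓ
  obtain ⟨c, hc, rfl⟩ | ⟨c, d₀, hc, rfl⟩ := hb.eq_smul_or_eq_smul_add hv hvℓ
  · have := h1 b hRb ((Submodule.smul_mem_iff _ hc).mp hvb)
    omega
  have hdb := (Submodule.smul_mem_iff _ hc).mp hvb
  have hcount := h2 b d₀ hRb hdb
  have hmem : d₀ ∈ D := by
    by_contra hd
    rw [if_neg hd] at hcount
    obtain ⟨x, hx⟩ := Finset.card_pos.mp
      (by omega : 0 < (Finset.univ.filter fun x => s x = d₀).card)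
    have hprod := hs d₀ hd
    rw [Finset.prod_eq_zero (Finset.mem_univ x)
      (sub_eq_zero.mpr (Finset.mem_filter.mp hx).2.symm)] at hprod
    exact zero_ne_one hprod
  rw [if_pos hmem] at hcount
  have hslope : ∀ d, e + d • g ∈ b.val → d = d₀ := fun d hd => by
    simpa using (hb.mem_iff_of_add_smul_mem hRℓ hRb hdb 0 1 d).mp (by simpa using hd)
  refine ⟨s, d₀, ⟨hmem, hs, fun d hd hne => ?_, fun x hx => ?_⟩, ⟨fun L hL => ?_,
    fun L d hL => ?_⟩, hslope⟩
  · by_contra! hno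
    obtain ⟨L, hrL, hdL⟩ := 
      exists_line_of_notMem hRℓ (hb.add_smul_ne_zero d) (hb.add_smul_mem d)
    have hL := h2 L d hrL hdL
    rw [if_pos hd, Finset.filter_false_of_mem fun x _ => hno x, Finset.card_empty] at hL
    obtain rfl := huniq L ⟨(pgMem_mk hr0 L).mpr hrL, hL⟩
    exact hne (hslope d hdL)
  · have h0 : (Finset.univ.filter fun x => s x = d₀).card = 0 := by omega
    exact Finset.notMem_empty x (Finset.card_eq_zero.mp h0 ▸ by simp [hx])
  · exact h1 L ((pgMem_mk hr0 L).mp hL)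
  · exact h2 L d ((pgMem_mk hr0 L).mp hL)

/-- Points of `B` off `ℓ` whose slope systems avoid the same slope are joined to each point of `ℓ`
by lines meeting `B` in the same number of points. -/
theorem IsSlopesAt.nsec_eq_nsec {B : Set (PGPoint F)} {ℓ : PGLine F} {e g : Fin 3 → F}
    {D : Finset F} {R₁ R₂ M : PGPoint F} {s₁ s₂ : Fˣ → F} {d₀ : F} (hb : IsLineBasis ℓ e g)
    (h₁ : IsSlopesAt B e g D R₁ s₁) (h₂ : IsSlopesAt B e g D R₂ s₂)
    (hs₁ : IsSlopeSystem D d₀ s₁) (hs₂ : IsSlopeSystem D d₀ s₂) (hM : pgMem M ℓ)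
    {L₁ L₂ : PGLine F} (hML₁ : pgMem M L₁) (hRL₁ : pgMem R₁ L₁) (hML₂ : pgMem M L₂)
    (hRL₂ : pgMem R₂ L₂) : nsec B L₁ = nsec B L₂ := by
  induction M using Projectivization.ind with | h v hv => ?_
  rw [pgMem_mk] at hM hML₁ hML₂
  obtain ⟨c, hc, rfl⟩ | ⟨c, d, hc, rfl⟩ := hb.eq_smul_or_eq_smul_add hv hM
  · rw [Submodule.smul_mem_iff _ hc] at hML₁ hML₂
    rw [h₁.nsec_eq_one L₁ hRL₁ hML₁, h₂.nsec_eq_one L₂ hRL₂ hML₂]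
  · rw [Submodule.smul_mem_iff _ hc] at hML₁ hML₂
    rw [h₁.nsec_eq L₁ d hRL₁ hML₁, h₂.nsec_eq L₂ d hRL₂ hML₂, hs₁.card_filter_eq hs₂]

end Redei

/-- Let `B` be a blocking set of Rédei type in `PG(2,q)`, `q = p^h`, with Rédei line `ℓ`.
(1) If there is a point in `B ∖ ℓ` contained in exactly one bisecant of `B`,
    then `|B ∩ ℓ| ≢ 1 (mod p)`.
(2) If `R₁, R₂ ∈ B ∖ ℓ` are each contained in exactly one bisecant of `B`, and there is a
    point `T ∈ ℓ` such that both lines `R₁T` and `R₂T` meet `B` in at least four points,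
    then `|MR₁ ∩ B| = |MR₂ ∩ B|` for every `M ∈ ℓ`.
(3) If `R₁, R₂ ∈ B ∖ ℓ` are each contained in exactly one bisecant of `B` and the common
    point of these two bisecants lies on `ℓ`, then `|MR₁ ∩ B| = |MR₂ ∩ B|` for every `M ∈ ℓ`. -/
theorem stmt_2 {F : Type*} [Field F] [Fintype F] (p h q : ℕ) (hp : p.Prime) (hq : q = p ^ h)
    (hcard : Fintype.card F = q)
    (B : Set (PGPoint F)) (ℓ : PGLine F) (hB : isRedeiWithLine q B ℓ) :
    ((∃ R ∈ B, ¬ pgMem R ℓ ∧ (∃! L : PGLine F, pgMem R L ∧ nsec B L = 2)) →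
      ¬ (nsec B ℓ ≡ 1 [MOD p])) ∧
    (∀ R₁ ∈ B, ∀ R₂ ∈ B, ¬ pgMem R₁ ℓ → ¬ pgMem R₂ ℓ →
      (∃! L : PGLine F, pgMem R₁ L ∧ nsec B L = 2) →
      (∃! L : PGLine F, pgMem R₂ L ∧ nsec B L = 2) →
      (∃ T : PGPoint F, pgMem T ℓ ∧
        (∀ L : PGLine F, pgMem R₁ L → pgMem T L → 4 ≤ nsec B L) ∧
        (∀ L : PGLine F, pgMem R₂ L → pgMem T L → 4 ≤ nsec B L)) →
      ∀ M : PGPoint F, pgMem M ℓ →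
        ∀ L₁ L₂ : PGLine F, pgMem M L₁ → pgMem R₁ L₁ → pgMem M L₂ → pgMem R₂ L₂ →
          nsec B L₁ = nsec B L₂) ∧
    (∀ R₁ ∈ B, ∀ R₂ ∈ B, ¬ pgMem R₁ ℓ → ¬ pgMem R₂ ℓ →
      ∀ b₁ b₂ : PGLine F,
        (pgMem R₁ b₁ ∧ nsec B b₁ = 2 ∧ ∀ L : PGLine F, pgMem R₁ L ∧ nsec B L = 2 → L = b₁) →
        (pgMem R₂ b₂ ∧ nsec B b₂ = 2 ∧ ∀ L : PGLine F, pgMem R₂ L ∧ nsec B L = 2 → L = b₂) →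
        (∃ X : PGPoint F, pgMem X b₁ ∧ pgMem X b₂ ∧ pgMem X ℓ) →
        ∀ M : PGPoint F, pgMem M ℓ →
          ∀ L₁ L₂ : PGLine F, pgMem M L₁ → pgMem R₁ L₁ → pgMem M L₂ → pgMem R₂ L₂ →
            nsec B L₁ = nsec B L₂) := by
  classical
  subst hcard
  obtain ⟨g, hg0, hgℓ, hg⟩ := hB.exists_notMem
  obtain ⟨e, hb⟩ := exists_isLineBasis ℓ hg0 hgℓ
  let D : Finset F := Finset.univ.filter fun d => e + d • g ∈ pgCone B
  have hD : ∀ d, d ∈ D ↔ e + d • g ∈ pgCone B := fun d => by simp [D]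
  refine ⟨?_, ?_, ?_⟩
  · rintro ⟨R, hRB, hRℓ, b, ⟨hRb, hb2⟩, huniq⟩ hmod
    obtain ⟨s, d₀, hs, -⟩ := hB.exists_isSlopeSystem hb hg hRB hRℓ hRb hb2 huniq hD
    refine hs.card_ne_one ?_
    have hp0 : (p : F) = 0 := by
      have h0 := Nat.cast_card_eq_zero F
      rw [hq, Nat.cast_pow] at h0
      exact eq_zero_of_pow_eq_zero h0
    rw [card_filter_pgCone hb hg]
    obtain ⟨k, hk⟩ := (Nat.modEq_iff_dvd.mp hmod.symm)
    have hk' := congrArg (Int.cast : ℤ → F) hk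
    push_cast at hk'
    rw [hp0, zero_mul] at hk'
    exact sub_eq_zero.mp hk'
  · intro R₁ hR₁ R₂ hR₂ hR₁ℓ hR₂ℓ ⟨b₁, ⟨hRb₁, hb₁⟩, hu₁⟩ ⟨b₂, ⟨hRb₂, hb₂⟩, hu₂⟩ ⟨T, hTℓ, hT₁, hT₂⟩
      M hMℓ L₁ L₂ hML₁ hRL₁ hML₂ hRL₂
    obtain ⟨s₁, d₁, hs₁, hat₁, -⟩ :=
      hB.exists_isSlopeSystem hb hg hR₁ hR₁ℓ hRb₁ hb₁ hu₁ hD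
    obtain ⟨s₂, d₂, hs₂, hat₂, -⟩ :=
      hB.exists_isSlopeSystem hb hg hR₂ hR₂ℓ hRb₂ hb₂ hu₂ hD
    induction T using Projectivization.ind with | h v hv => ?_
    rw [pgMem_mk] at hTℓ
    simp only [pgMem_mk] at hT₁ hT₂
    have hline : ∀ R : PGPoint F, ¬ pgMem R ℓ → ∃ L : PGLine F, pgMem R L ∧ v ∈ L.val := by
      intro R hR
      induction R using Projectivization.ind with | h r hr => ?_
      simp only [pgMem_mk] at hR ⊢
      exact exists_line_of_notMem hR hv hTℓ
    obtain ⟨K₁, hRK₁, hvK₁⟩ := hline R₁ hR₁ℓ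
    obtain ⟨K₂, hRK₂, hvK₂⟩ := hline R₂ hR₂ℓ
    have h4₁ := hT₁ K₁ hRK₁ hvK₁
    have h4₂ := hT₂ K₂ hRK₂ hvK₂
    obtain ⟨c, hc, rfl⟩ | ⟨c, t, hc, rfl⟩ := hb.eq_smul_or_eq_smul_add hv hTℓ
    · rw [hat₁.nsec_eq_one K₁ hRK₁ ((Submodule.smul_mem_iff _ hc).mp hvK₁)] at h4₁
      omega
    · rw [hat₁.nsec_eq K₁ t hRK₁ ((Submodule.smul_mem_iff _ hc).mp hvK₁)] at h4₁
      rw [hat₂.nsec_eq K₂ t hRK₂ ((Submodule.smul_mem_iff _ hc).mp hvK₂)] at h4₂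
      have hd : d₁ = d₂ := hs₁.eq_of_two_le_card_filter hs₂ (t := t)
        (by split_ifs at h4₁ <;> omega) (by split_ifs at h4₂ <;> omega)
      subst hd
      exact hat₁.nsec_eq_nsec hb hat₂ hs₁ hs₂ hMℓ hML₁ hRL₁ hML₂ hRL₂
  · intro R₁ hR₁ R₂ hR₂ hR₁ℓ hR₂ℓ b₁ b₂ ⟨hRb₁, hb₁, hu₁⟩ ⟨hRb₂, hb₂, hu₂⟩ ⟨X, hXb₁, hXb₂, hXℓ⟩
      M hMℓ L₁ L₂ hML₁ hRL₁ hML₂ hRL₂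
    obtain ⟨s₁, d₁, hs₁, hat₁, hslope₁⟩ :=
      hB.exists_isSlopeSystem hb hg hR₁ hR₁ℓ hRb₁ hb₁ hu₁ hD
    obtain ⟨s₂, d₂, hs₂, hat₂, hslope₂⟩ :=
      hB.exists_isSlopeSystem hb hg hR₂ hR₂ℓ hRb₂ hb₂ hu₂ hD
    induction X using Projectivization.ind with | h v hv => ?_
    rw [pgMem_mk] at hXb₁ hXb₂ hXℓ
    obtain ⟨c, hc, rfl⟩ | ⟨c, t, hc, rfl⟩ := hb.eq_smul_or_eq_smul_add hv hXℓ
    · have := hat₁.nsec_eq_one b₁ hRb₁ ((Submodule.smul_mem_iff _ hc).mp hXb₁)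
      omega
    · obtain rfl := hslope₁ t ((Submodule.smul_mem_iff _ hc).mp hXb₁)
      obtain rfl := hslope₂ t ((Submodule.smul_mem_iff _ hc).mp hXb₂)
      exact hat₁.nsec_eq_nsec hb hat₂ hs₁ hs₂ hMℓ hML₁ hRL₁ hML₂ hRL₂
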